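/- Let T be a τ-theory and suppose T* is a model companion of T. Then the models of T* are exactly the existentially closed models of T_∀: a τ-structure M is a model of T* if and only if M is T_∀-existentially closed. -/

import Mathlib

/-!
A theory and its model companion have the same universal consequences, because each model of one
embeds into a model of the other. It therefore suffices to show that the models of a model complete
theory `S` are the `S_∀`-existentially closed structures.

The tool is compactness over a quantifier-free diagram: a formula with parameters in `M` that holds
in all extensions of `M` to models of `S` follows, modulo `S`, from one quantifier-free formula
true in `M`. Applied to `⊥`, this embeds every model of `S_∀` into a model of `S`, so an embedding
of a model of `S` into a model of `S_∀` continues to an elementary embedding, and is Σ₁-elementary.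
Conversely, a Σ₁-elementary substructure of a model `N` of `S` passes the Tarski–Vaught test in `N`.
-/

namespace ModelCompanionship

open FirstOrder Language

universe u v

variable {L : FirstOrder.Language.{u, v}}

/-- A bundled `L`-structure with carrier in `Type (max u v)`. -/
structure BStruc (L : FirstOrder.Language.{u, v}) where
  /-- the underlying set of the structure -/
  carrier : Type (max u v)
  /-- the interpretation of the symbols of `L` -/
  struc : L.Structure carrier

attribute [instance] BStruc.struc

/-- Iterated existential quantification of the last `k` bound variables. -/
def exsN {α : Type*} : ∀ {m k : ℕ}, L.BoundedFormula α (m + k) → L.BoundedFormula α m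
  | _, 0, φ => φ
  | _, _ + 1, φ => exsN φ.ex

/-- `ψ` is a universal (`Π₁`) sentence: `∀ x⃗, φ` with `φ` quantifier-free. -/
def IsUniversalSentence (ψ : L.Sentence) : Prop :=
  ∃ (n : ℕ) (φ : L.BoundedFormula Empty n), φ.IsQF ∧ ψ = φ.alls

/-- `ψ` is a `Π₂` sentence: `∀ x⃗, ∃ y⃗, φ` with `φ` quantifier-free. -/
def IsPi2Sentence (ψ : L.Sentence) : Prop :=
  ∃ (m k : ℕ) (φ : L.BoundedFormula Empty (m + k)), φ.IsQF ∧ ψ = (exsN φ).alls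

/-- `ψ` holds in every model of `T`. -/
def SemConseq (T : L.Theory) (ψ : L.Sentence) : Prop :=
  ∀ M : BStruc L, M.carrier ⊨ T → M.carrier ⊨ ψ

/-- `T` is consistent: it has a model. -/
def Consistent (T : L.Theory) : Prop :=
  ∃ M : BStruc L, M.carrier ⊨ T

/-- `T` is complete: it is consistent and decides every sentence. -/
def IsCompleteTheory (T : L.Theory) : Prop :=
  Consistent T ∧ ∀ ψ : L.Sentence, SemConseq T ψ ∨ SemConseq T ψ.not

/-- `T_∀`: the set of universal sentences true in every model of `T`. -/
def univFrag (T : L.Theory) : L.Theory :=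
  {ψ | IsUniversalSentence ψ ∧ SemConseq T ψ}

/-- Two formulas in the same free variables are `T`-equivalent. -/
def TEquiv (T : L.Theory) {n : ℕ} (φ ψ : L.Formula (Fin n)) : Prop :=
  ∀ M : BStruc L, M.carrier ⊨ T → ∀ v : Fin n → M.carrier, φ.Realize v ↔ ψ.Realize v

section Maps

variable {M : Type (max u v)} {N : Type (max u v)} [L.Structure M] [L.Structure N]

/-- `f` preserves and reflects all first-order formulas (with parameters). -/
def ElementaryOn (f : M → N) : Prop :=
  ∀ (n : ℕ) (φ : L.Formula (Fin n)) (v : Fin n → M),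
    φ.Realize v ↔ φ.Realize fun i => f (v i)

/-- The embedding `e` is `Σ₁`-elementary: every existential formula with parameters
from the domain which holds in the codomain holds in the domain. -/
def Sigma1Elementary (e : M ↪[L] N) : Prop :=
  ∀ (n k : ℕ) (φ : L.BoundedFormula (Fin n) k), φ.IsQF → ∀ v : Fin n → M,
    (φ.exs.Realize fun i => e (v i)) → φ.exs.Realize v

end Maps

/-- `M` is a `T`-existentially closed structure. -/
def IsEC (T : L.Theory) (M : Type (max u v)) [L.Structure M] : Prop :=
  (∃ (N : BStruc L) (_ : M ↪[L] N.carrier), N.carrier ⊨ T) ∧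
    ∀ (N : BStruc L) (e : M ↪[L] N.carrier), N.carrier ⊨ T → Sigma1Elementary e

/-- `T` is model complete: substructure inclusions between models of `T` are elementary. -/
def IsModelComplete (T : L.Theory) : Prop :=
  ∀ (M N : BStruc L) (e : M.carrier ↪[L] N.carrier),
    M.carrier ⊨ T → N.carrier ⊨ T → ElementaryOn (L := L) fun a => e a

/-- `T*` is a model companion of `T`. -/
def IsModelCompanion (T Tstar : L.Theory) : Prop :=
  (∀ M : BStruc L, M.carrier ⊨ T →
      ∃ (N : BStruc L) (_ : M.carrier ↪[L] N.carrier), N.carrier ⊨ Tstar) ∧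
    (∀ M : BStruc L, M.carrier ⊨ Tstar →
      ∃ (N : BStruc L) (_ : M.carrier ↪[L] N.carrier), N.carrier ⊨ T) ∧
    IsModelComplete Tstar


universe w

section Formulas

variable {α : Type*} {M N : Type*} [L.Structure M] [L.Structure N]

lemma realize_congr_freeVarFinset [DecidableEq α] {n : ℕ} {φ : L.BoundedFormula α n}
    {v w : α → M} {xs : Fin n → M} (h : ∀ a ∈ φ.freeVarFinset, v a = w a) :
    φ.Realize v xs ↔ φ.Realize w xs := by
  have realize_restrict (v' : α → M) (h' : ∀ a ∈ φ.freeVarFinset, v a = v' a) :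
      (φ.restrictFreeVar id).Realize (fun a => v a) xs ↔ φ.Realize v' xs :=
    BoundedFormula.realize_restrictFreeVar v' fun a => h' a a.2
  exact (realize_restrict v fun _ _ => rfl).symm.trans (realize_restrict w h)

lemma exists_finite_range_eqOn (F : Finset α) :
    ∃ ρ : α → α, (Set.range ρ).Finite ∧ ∀ a ∈ F, ρ a = a := by
  classical
  rcases isEmpty_or_nonempty α with _ | ⟨⟨a₀⟩⟩
  · exact ⟨id, Set.toFinite _, fun _ _ => rfl⟩
  · refine ⟨fun a => if a ∈ F then a else a₀, ?_, fun a ha => if_pos ha⟩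
    refine (insert a₀ F).finite_toSet.subset (Set.range_subset_iff.2 fun a => ?_)
    by_cases ha : a ∈ F <;> simp [ha]

lemma isQF_iInf {β : Type*} [Finite β] {n : ℕ} {φ : β → L.BoundedFormula α n}
    (hφ : ∀ b, (φ b).IsQF) : (BoundedFormula.iInf φ).IsQF := by
  have isQF_foldr (l : List β) : ((l.map φ).foldr (· ⊓ ·) ⊤).IsQF := by
    induction l with
    | nil => exact .top
    | cons b l ih => exact (hφ b).inf ih
  exact isQF_foldr _

lemma isUniversalSentence_iAlls {γ : Type*} [Finite γ] {θ : L.Formula (Empty ⊕ γ)}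
    (hθ : θ.IsQF) : IsUniversalSentence (θ.iAlls γ) :=
  ⟨_, _, hθ.relabel _, rfl⟩

lemma exists_isQF_realize_iff_of_isEmpty {n : ℕ} (φ : L.BoundedFormula α n) :
    ∃ θ : L.BoundedFormula α n, θ.IsQF ∧ ∀ (K : Type w) [L.Structure K] [IsEmpty K]
      (v : α → K) (xs : Fin n → K), θ.Realize v xs ↔ φ.Realize v xs := by
  induction φ with
  | falsum => exact ⟨_, .falsum, fun _ _ _ _ _ => Iff.rfl⟩
  | equal t₁ t₂ => exact ⟨_, .of_isAtomic (.equal t₁ t₂), fun _ _ _ _ _ => Iff.rfl⟩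
  | rel R ts => exact ⟨_, .of_isAtomic (.rel R ts), fun _ _ _ _ _ => Iff.rfl⟩
  | imp φ₁ φ₂ ih₁ ih₂ =>
    obtain ⟨θ₁, hθ₁, h₁⟩ := ih₁
    obtain ⟨θ₂, hθ₂, h₂⟩ := ih₂
    exact ⟨_, hθ₁.imp hθ₂, fun K _ _ v xs => imp_congr (h₁ K v xs) (h₂ K v xs)⟩
  | all φ _ =>
    exact ⟨⊤, .top, fun K _ _ v xs => iff_of_true (BoundedFormula.realize_top.2 trivial)
      (BoundedFormula.realize_all.2 isEmptyElim)⟩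

lemma realize_embedding_of_isQF (e : M ↪[L] N) {θ : L.Formula α} (hθ : θ.IsQF) {v : α → M} :
    θ.Realize (e ∘ v) ↔ θ.Realize v := by
  rw [Formula.Realize, Formula.Realize, ← hθ.realize_embedding e,
    Subsingleton.elim (e ∘ default) default]

/-- A map preserving the truth of quantifier-free formulas, as an embedding of structures. -/
def embeddingOfRealizeIsQF (f : M → N)
    (hf : ∀ θ : L.Formula M, θ.IsQF → θ.Realize id → θ.Realize f) : M ↪[L] N :=
  have realize_iff (θ : L.Formula M) (hθ : θ.IsQF) : θ.Realize f ↔ θ.Realize id :=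
    ⟨fun h => by_contra fun h' => Formula.realize_not.1 (hf _ hθ.not h') h, hf θ hθ⟩
  { toFun := f
    inj' := fun a b => by
      simpa using (realize_iff ((Term.var a).equal (Term.var b))
        (BoundedFormula.IsAtomic.equal _ _).isQF).1
    map_fun' := fun g x => by
      simpa [eq_comm, Function.comp_def] using
        realize_iff ((Term.func g fun i => Term.var (x i)).equal (Term.var (Structure.funMap g x)))
          (BoundedFormula.IsAtomic.equal _ _).isQF
    map_rel' := fun r x => by
      simpa [Function.comp_def] using realize_iff (r.formula fun i => Term.var (x i))
        (BoundedFormula.IsAtomic.rel _ _).isQF }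

end Formulas

section Diagram

/-- The quantifier-free diagram of `M`: the quantifier-free sentences with parameters from `M` that
are true in `M`. A sentence with parameters is handled as a formula with free variables in `M`. -/
def qfDiagram (M : Type w) [L.Structure M] : L[[M]].Theory :=
  {ψ | (Formula.equivSentence.symm ψ).IsQF ∧ (Formula.equivSentence.symm ψ).Realize (id : M → M)}

variable {M : Type w} [L.Structure M]

lemma exists_embedding_of_models_qfDiagram (K : Type*) [L.Structure K] [L[[M]].Structure K]
    [(L.lhomWithConstants M).IsExpansionOn K] (hK : K ⊨ qfDiagram (L := L) M) :
    ∃ e : M ↪[L] K, ⇑e = fun a => (L.con a : K) := by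
  refine ⟨embeddingOfRealizeIsQF (fun a => (L.con a : K)) fun θ hθ hM => ?_, rfl⟩
  rw [← Formula.realize_equivSentence]
  exact hK.realize_of_mem _ (by simpa [qfDiagram] using ⟨hθ, hM⟩)

lemma exists_isQF_models_imp (S : L.Theory) (φ : L.Formula M)
    (hφ : ∀ (K : Theory.ModelType.{u, v, max u v w} S) (e : M ↪[L] K), φ.Realize e) :
    ∃ θ : L.Formula M, θ.IsQF ∧ θ.Realize id ∧ S ⊨ᵇ θ.imp φ := by
  have diagram_models_φ :
      (L.lhomWithConstants M).onTheory S ∪ qfDiagram M ⊨ᵇ Formula.equivSentence φ := by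
    refine Theory.models_sentence_iff.2 fun K => ?_
    let : L.Structure K := (L.lhomWithConstants M).reduct K
    have : K ⊨ S := ((L.lhomWithConstants M).onTheory_model S).1 (K.is_model.mono (by simp))
    obtain ⟨e, he⟩ := exists_embedding_of_models_qfDiagram (M := M) K
      (K.is_model.mono Set.subset_union_right)
    exact (Formula.realize_equivSentence K φ).2 (he ▸ hφ (.of S K) e)
  obtain ⟨T₀, hT₀, hT₀φ⟩ := Theory.models_iff_finset_models.1 diagram_models_φ
  let θ : L.Formula M := .iInf fun ψ : ↥((T₀ : L[[M]].Theory) ∩ qfDiagram M) =>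
    Formula.equivSentence.symm (ψ : L[[M]].Sentence)
  refine ⟨θ, isQF_iInf fun ψ => ψ.2.2.1, Formula.realize_iInf.2 fun ψ => ψ.2.2.2, ?_⟩
  refine Theory.models_formula_iff_onTheory_models_equivSentence.2
    (Theory.models_sentence_iff.2 fun K => ?_)
  let : L.Structure K := (L.lhomWithConstants M).reduct K
  refine (Formula.realize_equivSentence K _).2 (Formula.realize_imp.2 fun hθ => ?_)
  have : K ⊨ (T₀ : L[[M]].Theory) := by
    refine ⟨fun ψ hψ => ?_⟩
    rcases hT₀ hψ with hS | hD
    · exact K.is_model.realize_of_mem ψ hS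
    · exact (Formula.realize_equivSentence_symm_con K ψ).1
        (Formula.realize_iInf.1 hθ ⟨ψ, hψ, hD⟩)
  exact (Formula.realize_equivSentence K φ).1 (hT₀φ.realize_sentence K)

-- Compactness in Mathlib concerns nonempty models only; among empty structures every formula is
-- equivalent to a quantifier-free one, so there a single such formula suffices.
lemma exists_isQF_realize_imp_of_isEmpty [IsEmpty M] (S : L.Theory) (φ : L.Formula M)
    (hφ : M ⊨ S → φ.Realize (id : M → M)) :
    ∃ θ : L.Formula M, θ.IsQF ∧ θ.Realize (id : M → M) ∧
      ∀ (K : Type w) [L.Structure K] [IsEmpty K] (f : M → K),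
        K ⊨ S → θ.Realize f → φ.Realize f := by
  by_cases hM : M ⊨ S
  · obtain ⟨θ, hθ, θ_iff⟩ := exists_isQF_realize_iff_of_isEmpty.{u, v, w, w} φ
    exact ⟨θ, hθ, (θ_iff M _ _).2 (hφ hM), fun K _ _ f _ => (θ_iff K f _).1⟩
  · obtain ⟨χ, hχ, hMχ⟩ : ∃ χ ∈ S, ¬ M ⊨ χ := by simpa [Theory.model_iff] using hM
    obtain ⟨θ, hθ, θ_iff⟩ := exists_isQF_realize_iff_of_isEmpty.{u, v, w, 0} χ
    have realize_θ (K : Type w) [L.Structure K] [IsEmpty K] (f : M → K) :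
        (Formula.relabel Empty.elim θ).Realize f ↔ K ⊨ χ := by
      rw [Formula.realize_relabel, Formula.Realize, θ_iff K, Subsingleton.elim (f ∘ _) default]
      rfl
    exact ⟨(Formula.relabel Empty.elim θ).not, (hθ.relabel _).not,
      Formula.realize_not.2 fun h => hMχ ((realize_θ M id).1 h),
      fun K _ _ f hK h => (h ((realize_θ K f).2 (hK.realize_of_mem χ hχ))).elim⟩

end Diagram

section Embeddings

variable {M N P : Type (max u v)} [L.Structure M] [L.Structure N] [L.Structure P]

lemma exists_isQF_realize_imp_of_forall_embedding (S : L.Theory) (φ : L.Formula M)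
    (hφ : ∀ (K : BStruc L) (e : M ↪[L] K.carrier), K.carrier ⊨ S → φ.Realize e) :
    ∃ θ : L.Formula M, θ.IsQF ∧ θ.Realize id ∧
      ∀ (K : BStruc L) (f : M → K.carrier), K.carrier ⊨ S → θ.Realize f → φ.Realize f := by
  obtain ⟨θ, hθ, hMθ, hSθ⟩ := exists_isQF_models_imp S φ fun K e =>
    hφ ⟨K, inferInstance⟩ e K.is_model
  have realize_of_nonempty (K : BStruc L) [Nonempty K.carrier] (f : M → K.carrier)
      (hK : K.carrier ⊨ S) : θ.Realize f → φ.Realize f :=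
    Formula.realize_imp.1 (hSθ.realize_formula K.carrier)
  rcases isEmpty_or_nonempty M with _ | _
  · obtain ⟨θ', hθ', hMθ', realize_of_isEmpty⟩ := exists_isQF_realize_imp_of_isEmpty S φ fun hM =>
      hφ ⟨M, inferInstance⟩ (Embedding.refl L M) hM
    refine ⟨θ ⊓ θ', hθ.inf hθ', Formula.realize_inf.2 ⟨hMθ, hMθ'⟩, fun K f hK h => ?_⟩
    obtain ⟨h, h'⟩ := Formula.realize_inf.1 h
    rcases isEmpty_or_nonempty K.carrier with _ | _
    · exact realize_of_isEmpty K.carrier f hK h'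
    · exact realize_of_nonempty K f hK h
  · refine ⟨θ, hθ, hMθ, fun K f => ?_⟩
    have : Nonempty K.carrier := .map f inferInstance
    exact realize_of_nonempty K f

lemma models_univFrag_of_embedding {T : L.Theory} (e : M ↪[L] N) (hN : N ⊨ T) :
    M ⊨ univFrag T := by
  refine ⟨?_⟩
  rintro _ ⟨⟨_, φ, hφ, rfl⟩, hT⟩
  refine BoundedFormula.realize_alls.2 fun xs => (hφ.realize_embedding e).1 ?_
  rw [Subsingleton.elim (e ∘ default) default]
  exact BoundedFormula.realize_alls.1 (hT ⟨N, inferInstance⟩ hN) (e ∘ xs)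

lemma exists_embedding_of_models_univFrag {T : L.Theory} (hM : M ⊨ univFrag T) :
    ∃ (N : BStruc L) (_ : M ↪[L] N.carrier), N.carrier ⊨ T := by
  classical
  by_contra! no_embedding
  obtain ⟨θ, hθ, hMθ, hTθ⟩ := exists_isQF_realize_imp_of_forall_embedding T (⊥ : L.Formula M)
    fun K e hK => (no_embedding K e hK).elim
  obtain ⟨ρ, hρ, hρθ⟩ := exists_finite_range_eqOn θ.freeVarFinset
  have := hρ.to_subtype
  let ψ : L.Sentence :=
    (Formula.relabel (Sum.inr ∘ Set.rangeFactorization ρ) θ.not).iAlls (Set.range ρ)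
  have realize_ψ (K : Type (max u v)) [L.Structure K] :
      K ⊨ ψ ↔ ∀ y : Set.range ρ → K, ¬ θ.Realize (y ∘ Set.rangeFactorization ρ) := by
    simp [ψ, Sentence.Realize, Formula.realize_iAlls, Formula.realize_relabel,
      ← Function.comp_assoc]
  have hψ : ψ ∈ univFrag T := ⟨isUniversalSentence_iAlls (hθ.not.relabel _), fun K hK =>
    (realize_ψ K.carrier).2 fun y => hTθ K _ hK⟩
  exact (realize_ψ M).1 (hM.realize_of_mem ψ hψ) Subtype.val
    ((realize_congr_freeVarFinset hρθ).2 hMθ)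

lemma ElementaryOn.sigma1Elementary {e : M ↪[L] N} (he : ElementaryOn (L := L) e) :
    Sigma1Elementary e :=
  fun n _ φ _ v => (he n φ.exs v).2

lemma Sigma1Elementary.of_comp {f : N ↪[L] P} {e : M ↪[L] N}
    (h : Sigma1Elementary (f.comp e)) : Sigma1Elementary e := by
  intro n k φ hφ v hv
  obtain ⟨xs, hxs⟩ := BoundedFormula.realize_exs.1 hv
  exact h n k φ hφ v (BoundedFormula.realize_exs.2 ⟨f ∘ xs, (hφ.realize_embedding f).2 hxs⟩)

lemma Sigma1Elementary.exists_realize_sumElim {e : M ↪[L] N} (he : Sigma1Elementary e) {n : ℕ}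
    {γ : Type*} [Finite γ] {θ : L.Formula (Fin n ⊕ γ)} (hθ : θ.IsQF) {x : Fin n → M} {y : γ → N}
    (h : θ.Realize (Sum.elim (e ∘ x) y)) : ∃ z : γ → M, θ.Realize (Sum.elim x z) :=
  Formula.realize_iExs.1 (he n _ _ (hθ.relabel _) x (Formula.realize_iExs.2 ⟨y, h⟩))

lemma Sigma1Elementary.exists_realize_retraction {e : M ↪[L] N} (he : Sigma1Elementary e)
    {θ : L.Formula N} (hθ : θ.IsQF) (hNθ : θ.Realize id) {n : ℕ} (x : Fin n → M) :
    ∃ r : N → M, θ.Realize r ∧ ∀ i, r (e (x i)) = x i := by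
  classical
  obtain ⟨ρ, hρ, hρθ⟩ := exists_finite_range_eqOn θ.freeVarFinset
  have := hρ.to_subtype
  let s : N → Fin n ⊕ Set.range ρ :=
    Function.extend (e ∘ x) Sum.inl (Sum.inr ∘ Set.rangeFactorization ρ)
  have elim_comp_s {K : Type (max u v)} (v : Fin n → K) (y : Set.range ρ → K) :
      Sum.elim v y ∘ s = Function.extend (e ∘ x) v (y ∘ Set.rangeFactorization ρ) :=
    funext fun p => Function.apply_extend (Sum.elim v y) (e ∘ x) _ p
  have realize_s : (Formula.relabel s θ).Realize (Sum.elim (e ∘ x) (Subtype.val : _ → N)) := by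
    rw [Formula.realize_relabel, elim_comp_s]
    refine (realize_congr_freeVarFinset fun p hp => ?_).2 hNθ
    by_cases hpx : ∃ i, (e ∘ x) i = p
    · obtain ⟨i, rfl⟩ := hpx
      exact Function.FactorsThrough.extend_apply (fun _ _ h => h) _ i
    · rw [Function.extend_apply' _ _ _ hpx]
      exact hρθ p hp
  obtain ⟨z, hz⟩ := he.exists_realize_sumElim (θ := Formula.relabel s θ) (hθ.relabel _) realize_s
  rw [Formula.realize_relabel, elim_comp_s] at hz
  exact ⟨_, hz, Function.FactorsThrough.extend_apply (fun _ _ h => e.injective h) _⟩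

-- Tarski–Vaught test: by model completeness and compactness, `φ` at a tuple of `N` follows from a
-- quantifier-free formula with parameters in `N`, and Σ₁-elementarity moves those into `M`.
lemma IsModelComplete.models_of_sigma1Elementary {S : L.Theory} (hS : IsModelComplete S)
    {e : M ↪[L] N} (he : Sigma1Elementary e) (hN : N ⊨ S) : M ⊨ S := by
  refine (e.toElementaryEmbedding fun n φ x a hφ => ?_).theory_model_iff S |>.2 hN
  let w : Fin (n + 1) → N := Fin.snoc (e ∘ x) a
  let φ' : L.Formula (Fin (n + 1)) := φ.toFormula.relabel (Sum.elim Empty.elim id)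
  have realize_φ' {v : Fin (n + 1) → N} : φ'.Realize v ↔ φ.Realize default v := by
    rw [Formula.realize_relabel, BoundedFormula.realize_toFormula,
      Subsingleton.elim (_ ∘ _) default]
    rfl
  have realize_φ'_of_embedding (K : BStruc L) (f : N ↪[L] K.carrier) (hK : K.carrier ⊨ S) :
      (φ'.relabel w).Realize f :=
    Formula.realize_relabel.2 ((hS ⟨N, inferInstance⟩ K f hN hK _ φ' w).1 (realize_φ'.2 hφ))
  obtain ⟨θ, hθ, hNθ, hSθ⟩ :=
    exists_isQF_realize_imp_of_forall_embedding S (φ'.relabel w) realize_φ'_of_embedding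
  obtain ⟨r, hMθ, hr⟩ := he.exists_realize_retraction hθ hNθ x
  have hNθr : θ.Realize (e ∘ r) := (realize_embedding_of_isQF e hθ).2 hMθ
  have hw : (e ∘ r) ∘ w = Fin.snoc (e ∘ x) (e (r a)) := by
    funext i
    refine Fin.lastCases ?_ (fun i => ?_) i <;> simp [w, hr]
  exact ⟨r a, hw ▸ realize_φ'.1 (Formula.realize_relabel.1 (hSθ ⟨N, inferInstance⟩ _ hN hNθr))⟩

end Embeddings

lemma IsModelComplete.models_iff_isEC_univFrag {S : L.Theory} (hS : IsModelComplete S)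
    (M : Type (max u v)) [L.Structure M] : M ⊨ S ↔ IsEC (univFrag S) M := by
  constructor
  · intro hM
    refine ⟨⟨⟨M, inferInstance⟩, .refl L M, models_univFrag_of_embedding (.refl L M) hM⟩, ?_⟩
    intro N e hN
    obtain ⟨P, f, hP⟩ := exists_embedding_of_models_univFrag hN
    have elementary : ElementaryOn (L := L) (f.comp e) := hS ⟨M, inferInstance⟩ P _ hM hP
    exact elementary.sigma1Elementary.of_comp
  · rintro ⟨⟨N, e, hN⟩, sigma1_of_embedding⟩
    obtain ⟨P, f, hP⟩ := exists_embedding_of_models_univFrag hN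
    have hPS : P.carrier ⊨ univFrag S := models_univFrag_of_embedding (.refl L _) hP
    exact hS.models_of_sigma1Elementary (sigma1_of_embedding P (f.comp e) hPS) hP

lemma univFrag_subset_of_forall_exists_embedding {T T' : L.Theory}
    (h : ∀ M : BStruc L, M.carrier ⊨ T →
      ∃ (N : BStruc L) (_ : M.carrier ↪[L] N.carrier), N.carrier ⊨ T') :
    univFrag T' ⊆ univFrag T := by
  refine fun ψ hψ => ⟨hψ.1, fun M hM => ?_⟩
  obtain ⟨N, e, hN⟩ := h M hM
  exact (models_univFrag_of_embedding e hN).realize_of_mem ψ hψ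

lemma IsModelCompanion.univFrag_eq {T Tstar : L.Theory} (h : IsModelCompanion T Tstar) :
    univFrag T = univFrag Tstar :=
  (univFrag_subset_of_forall_exists_embedding h.2.1).antisymm
    (univFrag_subset_of_forall_exists_embedding h.1)

/-- the models of the model companion of `T` are exactly the
`T_∀`-existentially closed structures. -/
theorem modelCompanion_models_iff_ec (T Tstar : L.Theory)
    (h : IsModelCompanion T Tstar) (M : Type (max u v)) [L.Structure M] :
    M ⊨ Tstar ↔ IsEC (univFrag T) M := by
  rw [h.univFrag_eq]
  exact h.2.2.models_iff_isEC_univFrag M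

end ModelCompanionship
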